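/- Let a_1,...,a_n ∈ F_q be pairwise distinct. Then the (n,1,1) convolutional code with encoder G(z) = (1,1,...,1) + (a_1,...,a_n)z is MDP, i.e., d_0^c = n and d_1^c = 2(n−1)+1 = 2n−1. Conversely, if a_i = a_j for some i ≠ j, the code is not MDP. -/

import Mathlib

open Polynomial Matrix

noncomputable def wtTrunc {F : Type*} [Field F] {n : ℕ} (j : ℕ)
    (v : Fin n → Polynomial F) : ℕ :=
  {p : ℕ × Fin n | p.1 ≤ j ∧ (v p.2).coeff p.1 ≠ 0}.ncard

noncomputable def wtFull {F : Type*} [Field F] {n : ℕ} (v : Fin n → Polynomial F) : ℕ :=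
  {p : ℕ × Fin n | (v p.2).coeff p.1 ≠ 0}.ncard

noncomputable def colDist {F : Type*} [Field F] {n : ℕ}
    (C : Submodule (Polynomial F) (Fin n → Polynomial F)) (j : ℕ) : ℕ :=
  sInf {w | ∃ v ∈ C, (fun t => (v t).coeff 0) ≠ (0 : Fin n → F) ∧ w = wtTrunc j v}

noncomputable def freeDist {F : Type*} [Field F] {n : ℕ}
    (C : Submodule (Polynomial F) (Fin n → Polynomial F)) : ℕ :=
  sInf {w | ∃ v ∈ C, v ≠ 0 ∧ w = wtFull v}

def IsEncoder {F : Type*} [Field F] {k n : ℕ}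
    (C : Submodule (Polynomial F) (Fin n → Polynomial F))
    (G : Matrix (Fin k) (Fin n) (Polynomial F)) : Prop :=
  LinearIndependent (Polynomial F) (fun i : Fin k => fun t => G i t) ∧
    Submodule.span (Polynomial F) (Set.range (fun i : Fin k => fun t => G i t)) = C

def IsDelayFree {F : Type*} [Field F] {k n : ℕ}
    (G : Matrix (Fin k) (Fin n) (Polynomial F)) : Prop :=
  LinearIndependent F (fun i : Fin k => fun t => (G i t).coeff 0)

noncomputable def codeDegree {F : Type*} [Field F] {k n : ℕ}
    (G : Matrix (Fin k) (Fin n) (Polynomial F)) : ℕ :=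
  Finset.univ.sup fun φ : Fin k → Fin n => ((G.submatrix id φ).det).natDegree

noncomputable def rowDegSum {F : Type*} [Field F] {k n : ℕ}
    (G : Matrix (Fin k) (Fin n) (Polynomial F)) : ℕ :=
  ∑ i : Fin k, Finset.univ.sup fun t : Fin n => (G i t).natDegree

noncomputable def Gcoeff {F : Type*} [Field F] {k n : ℕ}
    (G : Matrix (Fin k) (Fin n) (Polynomial F)) (i : ℕ) : Matrix (Fin k) (Fin n) F :=
  fun a b => (G a b).coeff i

/-! A codeword `p • G` has truncated word `(p₀ • 1, p₁ • 1 + p₀ • a)` with `p₀ ≠ 0`. The first block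
has full weight `n`, and the second vanishes exactly where `a` takes the value `-p₁ / p₀`, which can
be made any scalar. Hence `d₁ᶜ` is `2 * n` minus the largest multiplicity of a value of `a`, and the
distance is maximal iff every value is taken only once. -/

section MaxMultiplicity

variable {ι α : Type*} [Fintype ι] [DecidableEq α]

/-- The largest number of indices at which the family `a` takes one and the same value; it measures
how far `a` is from being injective. Only values in the range of `a` are compared, so `α` may be
infinite. -/
def maxMultiplicity (a : ι → α) : ℕ :=
  Finset.univ.sup fun s => Finset.card {t | a t = a s}

lemma card_filter_eq_le_maxMultiplicity (a : ι → α) (c : α) :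
    Finset.card {t | a t = c} ≤ maxMultiplicity a := by
  by_cases hc : ∃ s, a s = c
  · obtain ⟨s, rfl⟩ := hc
    exact Finset.le_sup (f := fun s => Finset.card {t | a t = a s}) (Finset.mem_univ s)
  · simp [Finset.filter_eq_empty_iff.2 fun t _ ht => hc ⟨t, ht⟩]

variable [Nonempty ι]

lemma exists_card_filter_eq_maxMultiplicity (a : ι → α) :
    ∃ c, Finset.card {t | a t = c} = maxMultiplicity a := by
  obtain ⟨s, -, hs⟩ := Finset.univ.exists_mem_eq_sup Finset.univ_nonempty
    fun s => Finset.card {t | a t = a s}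
  exact ⟨a s, hs.symm⟩

lemma maxMultiplicity_pos (a : ι → α) : 0 < maxMultiplicity a := by
  obtain ⟨s⟩ := ‹Nonempty ι›
  have hs : 0 < Finset.card {t | a t = a s} := Finset.card_pos.2 ⟨s, by simp⟩
  exact hs.trans_le (card_filter_eq_le_maxMultiplicity a (a s))

lemma maxMultiplicity_eq_one_iff_injective (a : ι → α) :
    maxMultiplicity a = 1 ↔ Function.Injective a := by
  constructor
  · intro h s t hst
    have hle : Finset.card {u | a u = a t} ≤ 1 :=
      h ▸ card_filter_eq_le_maxMultiplicity a (a t)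
    exact Finset.card_le_one.1 hle s (by simpa using hst) t (by simp)
  · intro ha
    refine le_antisymm (Finset.sup_le fun s _ => Finset.card_le_one.2 ?_) (maxMultiplicity_pos a)
    intro t ht u hu
    exact ha ((Finset.mem_filter.1 ht).2.trans (Finset.mem_filter.1 hu).2.symm)

end MaxMultiplicity

lemma hammingNorm_one {ι R : Type*} [Fintype ι] [Zero R] [One R] [NeZero (1 : R)]
    [DecidableEq R] : hammingNorm (1 : ι → R) = Fintype.card ι := by
  simp [hammingNorm]

lemma coeff_zero_smul_eq {ι R : Type*} [Semiring R] (p : R[X]) (g : ι → R[X]) :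
    (fun t => ((p • g) t).coeff 0) = p.coeff 0 • fun t => (g t).coeff 0 := by
  ext t
  simp [mul_coeff_zero]

section ColumnDistance

variable {F : Type*} [Field F] {n : ℕ}

lemma wtTrunc_eq_sum_hammingNorm [DecidableEq F] (j : ℕ) (v : Fin n → F[X]) :
    wtTrunc j v = ∑ i ∈ Finset.range (j + 1), hammingNorm fun t => (v t).coeff i := by
  have hsupport : {p : ℕ × Fin n | p.1 ≤ j ∧ (v p.2).coeff p.1 ≠ 0} =
      ↑{p ∈ Finset.range (j + 1) ×ˢ (Finset.univ : Finset (Fin n)) | (v p.2).coeff p.1 ≠ 0} := by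
    ext p
    simp
  simp only [wtTrunc, hsupport, Set.ncard_coe_finset, hammingNorm, Finset.card_filter,
    Finset.sum_product]

lemma colDist_span_singleton {g : Fin n → F[X]} (hg : (fun t => (g t).coeff 0) ≠ 0) (j : ℕ) :
    colDist (Submodule.span F[X] {g}) j =
      sInf ((fun p : F[X] => wtTrunc j (p • g)) '' {p | p.coeff 0 ≠ 0}) := by
  have hdelay (p : F[X]) : (fun t => ((p • g) t).coeff 0) ≠ 0 ↔ p.coeff 0 ≠ 0 := by
    rw [coeff_zero_smul_eq, smul_ne_zero_iff, and_iff_left hg]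
  rw [colDist]
  congr 1
  ext w
  constructor
  · rintro ⟨v, hv, hv₀, rfl⟩
    obtain ⟨p, rfl⟩ := Submodule.mem_span_singleton.1 hv
    exact ⟨p, (hdelay p).1 hv₀, rfl⟩
  · rintro ⟨p, hp, rfl⟩
    exact ⟨p • g, Submodule.mem_span_singleton.2 ⟨p, rfl⟩, (hdelay p).2 hp, rfl⟩

lemma colDist_zero_span_singleton [DecidableEq F] {g : Fin n → F[X]}
    (hg : (fun t => (g t).coeff 0) ≠ 0) :
    colDist (Submodule.span F[X] {g}) 0 = hammingNorm fun t => (g t).coeff 0 := by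
  have hwt {p : F[X]} (hp : p.coeff 0 ≠ 0) :
      wtTrunc 0 (p • g) = hammingNorm fun t => (g t).coeff 0 := by
    rw [wtTrunc_eq_sum_hammingNorm, zero_add, Finset.sum_range_one, coeff_zero_smul_eq]
    exact hammingNorm_smul (fun _ => IsSMulRegular.of_ne_zero hp) _
  rw [colDist_span_singleton hg]
  refine IsLeast.csInf_eq ⟨⟨1, by simp, hwt (by simp)⟩, ?_⟩
  rintro _ ⟨p, hp, rfl⟩
  exact (hwt hp).ge

end ColumnDistance

section UnitMemory

variable {F : Type*} [Field F] {n : ℕ}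

/-- The `1 × n` encoder `G(z) = (1, …, 1) + (a₁, …, aₙ) z`, as a vector of polynomials: its span is
the convolutional code whose column distances are studied. -/
noncomputable def unitMemoryEncoder (a : Fin n → F) : Fin n → F[X] :=
  fun t => 1 + C (a t) * X

lemma coeff_zero_unitMemoryEncoder (a : Fin n → F) :
    (fun t => (unitMemoryEncoder a t).coeff 0) = 1 := by
  ext t
  simp [unitMemoryEncoder, mul_coeff_zero]

lemma coeff_one_smul_unitMemoryEncoder (a : Fin n → F) (p : F[X]) (t : Fin n) :
    ((p • unitMemoryEncoder a) t).coeff 1 = p.coeff 1 + p.coeff 0 * a t := by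
  rw [Pi.smul_apply, smul_eq_mul, unitMemoryEncoder, mul_add, mul_one, ← mul_assoc, coeff_add,
    coeff_mul_X, coeff_mul_C]

lemma wtTrunc_one_smul_unitMemoryEncoder_add_card [DecidableEq F] (a : Fin n → F) {p : F[X]}
    (hp : p.coeff 0 ≠ 0) :
    wtTrunc 1 (p • unitMemoryEncoder a) +
      Finset.card {t | a t = -p.coeff 1 / p.coeff 0} = 2 * n := by
  have hblock₀ : hammingNorm (fun t => ((p • unitMemoryEncoder a) t).coeff 0) = n := by
    rw [coeff_zero_smul_eq, coeff_zero_unitMemoryEncoder,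
      hammingNorm_smul fun _ => IsSMulRegular.of_ne_zero hp, hammingNorm_one, Fintype.card_fin]
  have hzero (t : Fin n) :
      ((p • unitMemoryEncoder a) t).coeff 1 = 0 ↔ a t = -p.coeff 1 / p.coeff 0 := by
    rw [coeff_one_smul_unitMemoryEncoder, eq_div_iff hp, eq_neg_iff_add_eq_zero, add_comm, mul_comm]
  have hblock₁ : Finset.card {t | a t = -p.coeff 1 / p.coeff 0} +
      hammingNorm (fun t => ((p • unitMemoryEncoder a) t).coeff 1) = n := by
    simp only [hammingNorm, ne_eq, hzero]
    rw [Finset.card_filter_add_card_filter_not, Finset.card_univ, Fintype.card_fin]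
  rw [wtTrunc_eq_sum_hammingNorm, Finset.sum_range_succ, Finset.sum_range_one, hblock₀]
  omega

variable [NeZero n]

lemma coeff_zero_unitMemoryEncoder_ne_zero (a : Fin n → F) :
    (fun t => (unitMemoryEncoder a t).coeff 0) ≠ 0 := by
  rw [coeff_zero_unitMemoryEncoder]
  exact one_ne_zero

theorem colDist_zero_span_unitMemoryEncoder (a : Fin n → F) :
    colDist (Submodule.span F[X] {unitMemoryEncoder a}) 0 = n := by
  classical
  rw [colDist_zero_span_singleton (coeff_zero_unitMemoryEncoder_ne_zero a),
    coeff_zero_unitMemoryEncoder, hammingNorm_one, Fintype.card_fin]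

theorem colDist_one_span_unitMemoryEncoder [DecidableEq F] (a : Fin n → F) :
    colDist (Submodule.span F[X] {unitMemoryEncoder a}) 1 = 2 * n - maxMultiplicity a := by
  rw [colDist_span_singleton (coeff_zero_unitMemoryEncoder_ne_zero a)]
  apply IsLeast.csInf_eq
  constructor
  · obtain ⟨c, hc⟩ := exists_card_filter_eq_maxMultiplicity a
    have hp₀ : (1 - C c * X : F[X]).coeff 0 = 1 := by simp [mul_coeff_zero]
    have hp₁ : (1 - C c * X : F[X]).coeff 1 = -c := by simp [coeff_one]
    have hp : (1 - C c * X : F[X]).coeff 0 ≠ 0 := hp₀ ▸ one_ne_zero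
    have hwt := wtTrunc_one_smul_unitMemoryEncoder_add_card a hp
    rw [hp₀, hp₁, neg_neg, div_one, hc] at hwt
    exact ⟨1 - C c * X, hp, Nat.eq_sub_of_add_eq hwt⟩
  · rintro _ ⟨p, hp, rfl⟩
    have hwt := wtTrunc_one_smul_unitMemoryEncoder_add_card a hp
    have hcard := card_filter_eq_le_maxMultiplicity a (-p.coeff 1 / p.coeff 0)
    dsimp only
    omega

theorem stmt16_general (a : Fin n → F) :
    Function.Injective a ↔
      colDist (Submodule.span F[X] {unitMemoryEncoder a}) 0 = n ∧
        colDist (Submodule.span F[X] {unitMemoryEncoder a}) 1 = 2 * n - 1 := by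
  classical
  have hpos : 0 < maxMultiplicity a := maxMultiplicity_pos a
  have hle : maxMultiplicity a ≤ n := by
    obtain ⟨c, hc⟩ := exists_card_filter_eq_maxMultiplicity a
    exact hc ▸ card_finset_fin_le _
  rw [colDist_zero_span_unitMemoryEncoder, colDist_one_span_unitMemoryEncoder,
    ← maxMultiplicity_eq_one_iff_injective]
  omega

end UnitMemory

theorem stmt16 {F : Type*} [Field F] [Fintype F] {n : ℕ} (hn : 3 ≤ n)
    (a : Fin n → F) :
    Function.Injective a ↔
      (colDist (Submodule.span (Polynomial F)
          {(fun t : Fin n => 1 + Polynomial.C (a t) * Polynomial.X :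
            Fin n → Polynomial F)}) 0 = n ∧
       colDist (Submodule.span (Polynomial F)
          {(fun t : Fin n => 1 + Polynomial.C (a t) * Polynomial.X :
            Fin n → Polynomial F)}) 1 = 2 * n - 1) := by
  have : NeZero n := ⟨by omega⟩
  exact stmt16_general a
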